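/- Let σ be a well-formed step sequence of an acyclic net AN. Then the scenario induced by σ is a scenario of AN, and σ is a maximal step sequence of the induced scenario: scenario_AN(σ) ∈ scenarios(AN) and σ ∈ maxsseq(scenario_AN(σ)). -/

import Mathlib

/-- A net: a triple of places, transitions, and a flow relation. -/
structure Net (α : Type*) where
  places : Set α
  transitions : Set α
  flow : α → α → Prop

namespace Net

variable {α : Type*}

/-- The set of direct predecessors (preset) of a node. -/
def pre (N : Net α) (x : α) : Set α := {z | N.flow z x}

/-- The set of direct successors (postset) of a node. -/
def post (N : Net α) (x : α) : Set α := {z | N.flow x z}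

/-- Preset of a set of nodes. -/
def preSet (N : Net α) (X : Set α) : Set α := ⋃ x ∈ X, N.pre x

/-- Postset of a set of nodes. -/
def postSet (N : Net α) (X : Set α) : Set α := ⋃ x ∈ X, N.post x

/-- Initial places: places with empty preset. -/
def initPlaces (N : Net α) : Set α := {p ∈ N.places | N.pre p = ∅}

/-- Final places: places with empty postset. -/
def finPlaces (N : Net α) : Set α := {p ∈ N.places | N.post p = ∅}

/-- An acyclic net: places and transitions are disjoint finite sets, places nonempty,
the flow relation relates only places to transitions and vice versa, is acyclic, and
every transition has at least one pre-place and one post-place. -/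
def IsAcyclicNet (N : Net α) : Prop :=
  N.places.Finite ∧ N.transitions.Finite ∧
  Disjoint N.places N.transitions ∧
  (∀ x y, N.flow x y →
    (x ∈ N.places ∧ y ∈ N.transitions) ∨ (x ∈ N.transitions ∧ y ∈ N.places)) ∧
  N.places.Nonempty ∧
  (∀ x, ¬ Relation.TransGen N.flow x x) ∧
  (∀ t ∈ N.transitions, (N.pre t).Nonempty ∧ (N.post t).Nonempty)

/-- An occurrence net: an acyclic net with `|pre p| ≤ 1` and `|post p| ≤ 1` for each place. -/
def IsOccurrenceNet (N : Net α) : Prop :=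
  IsAcyclicNet N ∧ ∀ p ∈ N.places, (N.pre p).Subsingleton ∧ (N.post p).Subsingleton

/-- A backward deterministic acyclic net: an acyclic net with `|pre p| ≤ 1` for each place. -/
def IsBDAN (N : Net α) : Prop :=
  IsAcyclicNet N ∧ ∀ p ∈ N.places, (N.pre p).Subsingleton

/-- `N` is a subnet of `M`: nonempty set of places included, transitions included,
flow is the restriction of that of `M`, and every transition of `N` retains its
full preset and postset from `M`. -/
def IsSubnet (N M : Net α) : Prop :=
  N.places.Nonempty ∧ N.places ⊆ M.places ∧ N.transitions ⊆ M.transitions ∧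
  (∀ x y, N.flow x y ↔ M.flow x y ∧
    ((x ∈ N.places ∧ y ∈ N.transitions) ∨ (x ∈ N.transitions ∧ y ∈ N.places))) ∧
  (∀ t ∈ N.transitions, N.pre t = M.pre t ∧ N.post t = M.post t)

/-- `N` is a co-initial subnet of `M` : a subnet with the same initial places. -/
def CoInitial (N M : Net α) : Prop := IsSubnet N M ∧ N.initPlaces = M.initPlaces

/-- A step: a nonempty set of transitions with pairwise disjoint presets. -/
def IsStep (N : Net α) (U : Set α) : Prop :=
  U.Nonempty ∧ U ⊆ N.transitions ∧ ∀ t ∈ U, ∀ u ∈ U, t ≠ u → N.pre t ∩ N.pre u = ∅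

/-- A step `U` is enabled at marking `M` if all its pre-places are in `M`. -/
def Enabled (N : Net α) (M U : Set α) : Prop := IsStep N U ∧ N.preSet U ⊆ M

/-- Executing an enabled step `U` at `M` yields `M' = (M ∪ post U) \ pre U`. -/
def StepTrans (N : Net α) (M U M' : Set α) : Prop :=
  Enabled N M U ∧ M' = (M ∪ N.postSet U) \ N.preSet U

/-- Step sequences from a marking to a marking. -/
inductive StepSeqFrom (N : Net α) : Set α → List (Set α) → Set α → Prop
  | nil (M : Set α) : StepSeqFrom N M [] M
  | cons {M U M' σ M''} : StepTrans N M U M' → StepSeqFrom N M' σ M'' →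
      StepSeqFrom N M (U :: σ) M''

/-- The initial marking: the set of initial places. -/
def initMarking (N : Net α) : Set α := N.initPlaces

/-- Step sequences executable from the initial marking. -/
def sseq (N : Net α) : Set (List (Set α)) := {σ | ∃ M, StepSeqFrom N N.initMarking σ M}

/-- Mixed step sequences: alternating steps and resulting markings from a marking. -/
inductive MixFrom (N : Net α) : Set α → List (Set α × Set α) → Prop
  | nil (M : Set α) : MixFrom N M []
  | cons {M U M' l} : StepTrans N M U M' → MixFrom N M' l → MixFrom N M ((U, M') :: l)

/-- Mixed step sequences from the initial marking, represented as the initial marking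
paired with the list of consecutive (step, marking) pairs. -/
def mixsseq (N : Net α) : Set (Set α × List (Set α × Set α)) :=
  {p | p.1 = N.initMarking ∧ MixFrom N p.1 p.2}

/-- Markings reachable from the initial marking. -/
def reach (N : Net α) : Set (Set α) := {M | ∃ σ, StepSeqFrom N N.initMarking σ M}

/-- Firing sequences: step sequences all of whose steps are singletons. -/
def fseq (N : Net α) : Set (List (Set α)) :=
  {σ | σ ∈ N.sseq ∧ ∀ U ∈ σ, ∃ t, U = {t}}

/-- Maximal step sequences: no step can be appended. -/
def maxsseq (N : Net α) : Set (List (Set α)) :=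
  {σ | σ ∈ N.sseq ∧ ¬ ∃ U, σ ++ [U] ∈ N.sseq}

/-- Maximal mixed step sequences: no step and marking can be appended. -/
def maxmixsseq (N : Net α) : Set (Set α × List (Set α × Set α)) :=
  {p | p ∈ N.mixsseq ∧ ¬ ∃ U M, (p.1, p.2 ++ [(U, M)]) ∈ N.mixsseq}

/-- Final reachable markings: markings reached by maximal step sequences. -/
def finreach (N : Net α) : Set (Set α) :=
  {M | ∃ σ ∈ N.maxsseq, StepSeqFrom N N.initMarking σ M}

/-- A step sequence is well-formed if post-sets of distinct transitions in the same
step are disjoint, and post-sets of distinct steps are disjoint. -/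
def WellFormedSeq (N : Net α) (σ : List (Set α)) : Prop :=
  (∀ U ∈ σ, ∀ t ∈ U, ∀ u ∈ U, t ≠ u → N.post t ∩ N.post u = ∅) ∧
  σ.Pairwise (fun U V => N.postSet U ∩ N.postSet V = ∅)

/-- The set of transitions occurring in a step sequence. -/
def transOf (σ : List (Set α)) : Set α := {t | ∃ U ∈ σ, t ∈ U}

/-- A net is well-formed if each transition occurs in at least one step sequence and
all step sequences are well-formed. -/
def WellFormedNet (N : Net α) : Prop :=
  (∀ t ∈ N.transitions, ∃ σ ∈ N.sseq, t ∈ transOf σ) ∧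
  (∀ σ ∈ N.sseq, N.WellFormedSeq σ)

/-- Scenarios of a net: occurrence nets that are co-initial subnets of it. -/
def scenarios (N : Net α) : Set (Net α) :=
  {S | IsOccurrenceNet S ∧ CoInitial S N}

/-- Maximal scenarios: scenarios not strictly included (co-initially) in another scenario. -/
def maxscenarios (N : Net α) : Set (Net α) :=
  {S | S ∈ N.scenarios ∧ ¬ ∃ S', S' ∈ N.scenarios ∧ S' ≠ S ∧ CoInitial S S'}

/-- The scenario induced by a (well-formed) step sequence `σ`:
transitions are those occurring in `σ`, places are the initial places together with
the postsets of those transitions, and the flow is the restriction. -/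
def inducedScenario (N : Net α) (σ : List (Set α)) : Net α where
  places := N.initMarking ∪ N.postSet (transOf σ)
  transitions := transOf σ
  flow := fun x y => N.flow x y ∧
    ((x ∈ N.initMarking ∪ N.postSet (transOf σ) ∧ y ∈ transOf σ) ∨
     (x ∈ transOf σ ∧ y ∈ N.initMarking ∪ N.postSet (transOf σ)))

end Net

/-!
In a well-formed run every place is marked at most once: initial places have no producers, and no
place is produced twice. Hence a consumed place is never marked again, so it is consumed only once,
and the final marking consists exactly of the places that were marked at some point and never
consumed. Uniqueness of producers and consumers makes the induced net an occurrence net. The run is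
maximal in it because any further step would reuse a transition of the run and thus need a place
that has already been consumed.
-/

namespace Net

variable {α : Type*} {N S : Net α} {M M' M'' U X Y : Set α} {σ τ : List (Set α)} {t p : α}

lemma mem_postSet : p ∈ N.postSet X ↔ ∃ t ∈ X, p ∈ N.post t := by
  simp only [postSet, Set.mem_iUnion, exists_prop]

lemma pre_subset_preSet (ht : t ∈ X) : N.pre t ⊆ N.preSet X :=
  Set.subset_biUnion_of_mem ht

lemma post_subset_postSet (ht : t ∈ X) : N.post t ⊆ N.postSet X :=
  Set.subset_biUnion_of_mem ht

lemma preSet_union : N.preSet (X ∪ Y) = N.preSet X ∪ N.preSet Y :=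
  Set.biUnion_union X Y N.pre

lemma postSet_union : N.postSet (X ∪ Y) = N.postSet X ∪ N.postSet Y :=
  Set.biUnion_union X Y N.post

lemma transOf_cons : transOf (U :: σ) = U ∪ transOf σ := by
  ext t
  simp [transOf]

lemma subset_transOf (hU : U ∈ σ) : U ⊆ transOf σ :=
  fun _ ht => ⟨U, hU, ht⟩

lemma disjoint_postSet_transOf :
    Disjoint X (N.postSet (transOf σ)) ↔ ∀ V ∈ σ, Disjoint X (N.postSet V) := by
  induction σ with
  | nil => simp [transOf, postSet]
  | cons U σ ih => simp [transOf_cons, postSet_union, ih]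

lemma disjoint_initMarking_postSet : Disjoint N.initMarking (N.postSet X) := by
  refine Set.disjoint_left.2 fun p hp hpX => ?_
  obtain ⟨t, -, htp⟩ := mem_postSet.1 hpX
  exact Set.eq_empty_iff_forall_notMem.1 hp.2 t htp

namespace IsAcyclicNet

lemma mem_transitions_of_mem_pre (hN : N.IsAcyclicNet) (hp : p ∈ N.places) (ht : t ∈ N.pre p) :
    t ∈ N.transitions := by
  obtain ⟨-, -, hdisj, hflow, -⟩ := hN
  exact (hflow t p ht).elim (fun h => (hdisj.notMem_of_mem_left hp h.2).elim) And.left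

lemma mem_transitions_of_mem_post (hN : N.IsAcyclicNet) (hp : p ∈ N.places) (ht : t ∈ N.post p) :
    t ∈ N.transitions := by
  obtain ⟨-, -, hdisj, hflow, -⟩ := hN
  exact (hflow p t ht).elim And.right fun h => (hdisj.notMem_of_mem_left hp h.1).elim

lemma pre_subset_places (hN : N.IsAcyclicNet) (ht : t ∈ N.transitions) : N.pre t ⊆ N.places := by
  obtain ⟨-, -, hdisj, hflow, -⟩ := hN
  exact fun p hp => (hflow p t hp).elim And.left fun h => (hdisj.notMem_of_mem_left h.2 ht).elim

lemma post_subset_places (hN : N.IsAcyclicNet) (ht : t ∈ N.transitions) :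
    N.post t ⊆ N.places := by
  obtain ⟨-, -, hdisj, hflow, -⟩ := hN
  exact fun p hp => (hflow t p hp).elim (fun h => (hdisj.notMem_of_mem_left h.1 ht).elim) And.right

lemma pre_nonempty (hN : N.IsAcyclicNet) (ht : t ∈ N.transitions) : (N.pre t).Nonempty :=
  (hN.2.2.2.2.2.2 t ht).1

lemma initPlaces_nonempty (hN : N.IsAcyclicNet) : N.initPlaces.Nonempty := by
  obtain ⟨hfin, -, -, -, hne, hacyclic, -⟩ := id hN
  have : IsStrictOrder α (Relation.TransGen N.flow) :=
    { irrefl := hacyclic, trans := fun _ _ _ => Relation.TransGen.trans }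
  have := hne.to_subtype
  obtain ⟨⟨p, hp⟩, -, hmin⟩ :=
    (hfin.wellFoundedOn (r := Relation.TransGen N.flow)).has_min Set.univ Set.univ_nonempty
  refine ⟨p, hp, Set.eq_empty_iff_forall_notMem.2 fun t htp => ?_⟩
  have ht := hN.mem_transitions_of_mem_pre hp htp
  obtain ⟨q, hqt⟩ := hN.pre_nonempty ht
  exact hmin ⟨q, hN.pre_subset_places ht hqt⟩ trivial (.tail (.single hqt) htp)

lemma isOccurrenceNet_of_pairwiseDisjoint (hN : N.IsAcyclicNet)
    (hpre : N.transitions.PairwiseDisjoint N.pre)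
    (hpost : N.transitions.PairwiseDisjoint N.post) : N.IsOccurrenceNet := by
  refine ⟨hN, fun p hp => ⟨fun t ht u hu => ?_, fun t ht u hu => ?_⟩⟩
  · exact hpost.elim_set (hN.mem_transitions_of_mem_pre hp ht)
      (hN.mem_transitions_of_mem_pre hp hu) p ht hu
  · exact hpre.elim_set (hN.mem_transitions_of_mem_post hp ht)
      (hN.mem_transitions_of_mem_post hp hu) p ht hu

end IsAcyclicNet

namespace IsSubnet

lemma isAcyclicNet (hSN : S.IsSubnet N) (hN : N.IsAcyclicNet) : S.IsAcyclicNet := by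
  obtain ⟨hne, hplaces, htransitions, hflow, hprepost⟩ := hSN
  obtain ⟨hpfin, htfin, hdisj, -, -, hacyclic, htrans⟩ := hN
  refine ⟨hpfin.subset hplaces, htfin.subset htransitions, hdisj.mono hplaces htransitions,
    fun x y hxy => ((hflow x y).1 hxy).2, hne, fun x hx => ?_, fun t ht => ?_⟩
  · exact hacyclic x (Relation.TransGen.mono (fun a b hab => ((hflow a b).1 hab).1) x x hx)
  · rw [(hprepost t ht).1, (hprepost t ht).2]
    exact htrans t (htransitions ht)

lemma pre_eq (hSN : S.IsSubnet N) (ht : t ∈ S.transitions) : S.pre t = N.pre t :=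
  (hSN.2.2.2.2 t ht).1

lemma post_eq (hSN : S.IsSubnet N) (ht : t ∈ S.transitions) : S.post t = N.post t :=
  (hSN.2.2.2.2 t ht).2

lemma preSet_eq (hSN : S.IsSubnet N) (hX : X ⊆ S.transitions) : S.preSet X = N.preSet X :=
  Set.iUnion₂_congr fun _ ht => hSN.pre_eq (hX ht)

lemma postSet_eq (hSN : S.IsSubnet N) (hX : X ⊆ S.transitions) : S.postSet X = N.postSet X :=
  Set.iUnion₂_congr fun _ ht => hSN.post_eq (hX ht)

lemma stepTrans (hSN : S.IsSubnet N) (hU : U ⊆ S.transitions) (h : N.StepTrans M U M') :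
    S.StepTrans M U M' := by
  obtain ⟨⟨⟨hne, -, hdisj⟩, hen⟩, rfl⟩ := h
  refine ⟨⟨⟨hne, hU, fun t ht u hu htu => ?_⟩, ?_⟩, ?_⟩
  · rw [hSN.pre_eq (hU ht), hSN.pre_eq (hU hu)]
    exact hdisj t ht u hu htu
  · rwa [hSN.preSet_eq hU]
  · rw [hSN.preSet_eq hU, hSN.postSet_eq hU]

lemma stepSeqFrom (hSN : S.IsSubnet N) (hσ : transOf σ ⊆ S.transitions)
    (hs : N.StepSeqFrom M σ M') : S.StepSeqFrom M σ M' := by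
  induction hs with
  | nil M => exact .nil M
  | cons hstep _ ih =>
    rw [transOf_cons, Set.union_subset_iff] at hσ
    exact .cons (hSN.stepTrans hσ.1 hstep) (ih hσ.2)

lemma wellFormedSeq (hSN : S.IsSubnet N) (hσ : transOf σ ⊆ S.transitions)
    (hwf : N.WellFormedSeq σ) : S.WellFormedSeq σ := by
  have hsub : ∀ U ∈ σ, U ⊆ S.transitions := fun U hU => (subset_transOf hU).trans hσ
  refine ⟨fun U hU t ht u hu htu => ?_, hwf.2.imp_of_mem fun hU hV hUV => ?_⟩
  · rw [hSN.post_eq (hsub U hU ht), hSN.post_eq (hsub U hU hu)]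
    exact hwf.1 U hU t ht u hu htu
  · rwa [hSN.postSet_eq (hsub _ hU), hSN.postSet_eq (hsub _ hV)]

end IsSubnet

lemma CoInitial.mem_sseq (hSN : S.CoInitial N) (hσ : transOf σ ⊆ S.transitions)
    (hs : σ ∈ N.sseq) : σ ∈ S.sseq := by
  obtain ⟨M, hM⟩ := hs
  rw [initMarking, ← hSN.2] at hM
  exact ⟨M, hSN.1.stepSeqFrom hσ hM⟩

/-- A step sequence is fresh from a marking `M` if none of its steps produces a place of `M` or a
place produced by another step. Along such a run a consumed place is never marked again. -/
def FreshFrom (N : Net α) (M : Set α) (σ : List (Set α)) : Prop :=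
  Disjoint M (N.postSet (transOf σ)) ∧
    σ.Pairwise fun U V => Disjoint (N.postSet U) (N.postSet V)

lemma FreshFrom.of_stepTrans (hf : N.FreshFrom M (U :: σ)) (h : N.StepTrans M U M') :
    N.FreshFrom M' σ := by
  obtain ⟨hM, hpost⟩ := hf
  obtain ⟨-, rfl⟩ := h
  rw [transOf_cons, postSet_union, Set.disjoint_union_right] at hM
  rw [List.pairwise_cons] at hpost
  have hU : Disjoint (N.postSet U) (N.postSet (transOf σ)) := disjoint_postSet_transOf.2 hpost.1
  exact ⟨(hM.2.union_left hU).mono_left Set.sdiff_subset, hpost.2⟩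

lemma FreshFrom.disjoint_preSet_postSet (hf : N.FreshFrom M (U :: σ)) (hU : N.Enabled M U) :
    Disjoint (N.preSet U) (N.postSet (transOf σ)) := by
  have hM := hf.1
  rw [transOf_cons, postSet_union, Set.disjoint_union_right] at hM
  exact hM.2.mono_left hU.2

lemma WellFormedSeq.freshFrom_initMarking (hwf : N.WellFormedSeq σ) :
    N.FreshFrom N.initMarking σ :=
  ⟨disjoint_initMarking_postSet, hwf.2.imp Set.disjoint_iff_inter_eq_empty.2⟩

lemma WellFormedSeq.pairwiseDisjoint_post (hwf : N.WellFormedSeq σ) :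
    (transOf σ).PairwiseDisjoint N.post := by
  obtain ⟨hstep, hpost⟩ := hwf
  induction hpost with
  | nil => simp [transOf, Set.PairwiseDisjoint]
  | @cons U σ hUσ _ ih =>
    rw [List.forall_mem_cons] at hstep
    have hdisj : Disjoint (N.postSet U) (N.postSet (transOf σ)) :=
      disjoint_postSet_transOf.2 fun V hV => Set.disjoint_iff_inter_eq_empty.2 (hUσ V hV)
    rw [transOf_cons, Set.pairwiseDisjoint_union]
    refine ⟨fun t ht u hu htu => ?_, ih hstep.2, fun t ht u hu _ => ?_⟩
    · exact Set.disjoint_iff_inter_eq_empty.2 (hstep.1 t ht u hu htu)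
    · exact hdisj.mono (post_subset_postSet ht) (post_subset_postSet hu)

namespace StepSeqFrom

lemma exists_of_append (hs : N.StepSeqFrom M (σ ++ τ) M') :
    ∃ M₁, N.StepSeqFrom M σ M₁ ∧ N.StepSeqFrom M₁ τ M' := by
  induction σ generalizing M with
  | nil => exact ⟨M, .nil M, hs⟩
  | cons U σ ih =>
    cases hs with
    | cons hstep hrest =>
      obtain ⟨M₁, hσ, hτ⟩ := ih hrest
      exact ⟨M₁, .cons hstep hσ, hτ⟩

lemma transOf_subset_transitions (hs : N.StepSeqFrom M σ M') : transOf σ ⊆ N.transitions := by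
  induction hs with
  | nil => simp [transOf]
  | cons hstep _ ih =>
    rw [transOf_cons]
    exact Set.union_subset hstep.1.1.2.1 ih

lemma preSet_transOf_subset (hs : N.StepSeqFrom M σ M') :
    N.preSet (transOf σ) ⊆ M ∪ N.postSet (transOf σ) := by
  induction hs with
  | nil M => simp [transOf, preSet]
  | cons hstep _ ih =>
    obtain ⟨⟨-, hen⟩, rfl⟩ := hstep
    rw [transOf_cons, preSet_union, postSet_union, ← Set.union_assoc]
    refine Set.union_subset ?_ ?_
    · exact hen.trans (Set.subset_union_left.trans Set.subset_union_left)
    · exact ih.trans (Set.union_subset_union_left _ Set.sdiff_subset)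

lemma disjoint_preSet_of_stepTrans (hs : N.StepSeqFrom M' σ M'') (hstep : N.StepTrans M U M')
    (hf : N.FreshFrom M (U :: σ)) : Disjoint (N.preSet U) (N.preSet (transOf σ)) := by
  have hM' : Disjoint (N.preSet U) M' := by
    rw [hstep.2]
    exact Set.disjoint_sdiff_right
  exact (hM'.union_right (hf.disjoint_preSet_postSet hstep.1)).mono_right hs.preSet_transOf_subset

lemma pairwiseDisjoint_pre (hs : N.StepSeqFrom M σ M') (hf : N.FreshFrom M σ) :
    (transOf σ).PairwiseDisjoint N.pre := by
  induction hs with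
  | nil M => simp [transOf, Set.PairwiseDisjoint]
  | cons hstep hrest ih =>
    have hdisj := hrest.disjoint_preSet_of_stepTrans hstep hf
    rw [transOf_cons, Set.pairwiseDisjoint_union]
    refine ⟨fun t ht u hu htu => ?_, ih (hf.of_stepTrans hstep), fun t ht u hu _ => ?_⟩
    · exact Set.disjoint_iff_inter_eq_empty.2 (hstep.1.1.2.2 t ht u hu htu)
    · exact hdisj.mono (pre_subset_preSet ht) (pre_subset_preSet hu)

lemma marking_eq (hs : N.StepSeqFrom M σ M') (hf : N.FreshFrom M σ) :
    M' = (M ∪ N.postSet (transOf σ)) \ N.preSet (transOf σ) := by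
  induction hs with
  | nil M => simp [transOf, preSet, postSet]
  | @cons M U M₁ σ M' hstep _ ih =>
    have hdisj := hf.disjoint_preSet_postSet hstep.1
    calc
      M' = (M₁ ∪ N.postSet (transOf σ)) \ N.preSet (transOf σ) := ih (hf.of_stepTrans hstep)
      _ = ((M ∪ N.postSet U) \ N.preSet U ∪ N.postSet (transOf σ) \ N.preSet U) \
            N.preSet (transOf σ) := by rw [hstep.2, hdisj.sdiff_eq_right]
      _ = (M ∪ N.postSet (transOf (U :: σ))) \ N.preSet (transOf (U :: σ)) := by
        rw [← Set.union_sdiff_distrib, Set.sdiff_sdiff, Set.union_assoc, transOf_cons,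
          postSet_union, preSet_union]

end StepSeqFrom

lemma IsAcyclicNet.isOccurrenceNet_of_transitions_subset (hN : N.IsAcyclicNet) (hσ : σ ∈ N.sseq)
    (hwf : N.WellFormedSeq σ) (hT : N.transitions ⊆ transOf σ) : N.IsOccurrenceNet := by
  obtain ⟨M, hs⟩ := hσ
  exact hN.isOccurrenceNet_of_pairwiseDisjoint
    ((hs.pairwiseDisjoint_pre hwf.freshFrom_initMarking).subset hT)
    (hwf.pairwiseDisjoint_post.subset hT)

lemma mem_maxsseq_of_transitions_subset (hpre : ∀ t ∈ N.transitions, (N.pre t).Nonempty)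
    (hσ : σ ∈ N.sseq) (hwf : N.WellFormedSeq σ) (hT : N.transitions ⊆ transOf σ) :
    σ ∈ N.maxsseq := by
  refine ⟨hσ, ?_⟩
  rintro ⟨U, M', hs⟩
  obtain ⟨M, hσM, hUM⟩ := hs.exists_of_append
  cases hUM with
  | cons hstep _ =>
    obtain ⟨⟨⟨t, htU⟩, hUT, -⟩, hen⟩ := hstep.1
    obtain ⟨p, hp⟩ := hpre t (hUT htU)
    have hpM : p ∈ M := hen (pre_subset_preSet htU hp)
    rw [hσM.marking_eq hwf.freshFrom_initMarking] at hpM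
    exact hpM.2 (pre_subset_preSet (hT (hUT htU)) hp)

lemma initPlaces_inducedScenario : (N.inducedScenario σ).initPlaces = N.initPlaces := by
  ext p
  refine ⟨?_, fun hp => ⟨Or.inl hp, Set.eq_empty_iff_forall_notMem.2 fun t ht => ?_⟩⟩
  · rintro ⟨hp | hp, hpre⟩
    · exact hp
    · obtain ⟨t, ht, htp⟩ := mem_postSet.1 hp
      have htS : t ∈ (N.inducedScenario σ).pre p := ⟨htp, Or.inr ⟨ht, Or.inr hp⟩⟩
      exact (Set.eq_empty_iff_forall_notMem.1 hpre t htS).elim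
  · exact Set.eq_empty_iff_forall_notMem.1 hp.2 t ht.1

lemma pre_inducedScenario (hσ : σ ∈ N.sseq) (ht : t ∈ transOf σ) :
    (N.inducedScenario σ).pre t = N.pre t := by
  obtain ⟨M, hs⟩ := hσ
  refine Set.Subset.antisymm (fun p hp => hp.1) fun p hp => ⟨hp, Or.inl ⟨?_, ht⟩⟩
  exact hs.preSet_transOf_subset (pre_subset_preSet ht hp)

lemma post_inducedScenario (ht : t ∈ transOf σ) : (N.inducedScenario σ).post t = N.post t :=
  Set.Subset.antisymm (fun _ hp => hp.1) fun _ hp =>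
    ⟨hp, Or.inr ⟨ht, Or.inr (post_subset_postSet ht hp)⟩⟩

lemma IsAcyclicNet.coInitial_inducedScenario (hN : N.IsAcyclicNet) (hσ : σ ∈ N.sseq) :
    (N.inducedScenario σ).CoInitial N := by
  have hT : transOf σ ⊆ N.transitions := hσ.choose_spec.transOf_subset_transitions
  have hplaces : N.initMarking ∪ N.postSet (transOf σ) ⊆ N.places :=
    Set.union_subset (Set.sep_subset _ _)
      (Set.iUnion₂_subset fun t ht => hN.post_subset_places (hT ht))
  have hprepost : ∀ t ∈ transOf σ, (N.inducedScenario σ).pre t = N.pre t ∧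
      (N.inducedScenario σ).post t = N.post t :=
    fun t ht => ⟨pre_inducedScenario hσ ht, post_inducedScenario ht⟩
  exact ⟨⟨hN.initPlaces_nonempty.mono Set.subset_union_left, hplaces, hT, fun _ _ => Iff.rfl,
    hprepost⟩, initPlaces_inducedScenario⟩

end Net

/-- For a well-formed step sequence `σ` of an acyclic net `AN`,
`scenario_AN(σ) ∈ scenarios(AN)` and `σ ∈ maxsseq(scenario_AN(σ))`. -/
theorem stmt12 {α : Type*} (N : Net α) (h : N.IsAcyclicNet) (σ : List (Set α))
    (hσ : σ ∈ N.sseq) (hwf : N.WellFormedSeq σ) :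
    N.inducedScenario σ ∈ N.scenarios ∧ σ ∈ (N.inducedScenario σ).maxsseq := by
  have hT : (N.inducedScenario σ).transitions = Net.transOf σ := rfl
  have hco : (N.inducedScenario σ).CoInitial N := h.coInitial_inducedScenario hσ
  have hS : (N.inducedScenario σ).IsAcyclicNet := hco.1.isAcyclicNet h
  have hσS : σ ∈ (N.inducedScenario σ).sseq := hco.mem_sseq hT.ge hσ
  have hwfS : (N.inducedScenario σ).WellFormedSeq σ := hco.1.wellFormedSeq hT.ge hwf
  exact ⟨⟨hS.isOccurrenceNet_of_transitions_subset hσS hwfS hT.le, hco⟩,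
    Net.mem_maxsseq_of_transitions_subset (fun _ => hS.pre_nonempty) hσS hwfS hT.le⟩
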